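/- Let λ = (λ1,λ2,λ3,λ4) be an ordered weight vector with λ1 > 1/2, and let μ = (μ1,μ2,μ3,μ4) be any weight vector with μ1 ≥ 1/2. Then ρ_BD(λ) can be transformed to ρ_BD(μ) by SLOCC if and only if μ lies in the convex hull of the nine vectors consisting of: the six vectors (λ1, λ_{π(2)}, λ_{π(3)}, λ_{π(4)}) for π a permutation of {2,3,4}, together with λ_12 = (1/2,1/2,0,0), λ_13 = (1/2,0,1/2,0), and λ_14 = (1/2,0,0,1/2). -/

import Mathlib

open Matrix Complex
open scoped Kronecker ComplexOrder

noncomputable section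
namespace Paper

abbrev Q2 := Fin 2 × Fin 2
abbrev M4 := Matrix Q2 Q2 ℂ
abbrev M16 := Matrix (Q2 × Q2) (Q2 × Q2) ℂ

/-- `1/√2` as a complex number. -/
def invSqrt2 : ℂ := ((Real.sqrt 2)⁻¹ : ℝ)

/-- The four Bell states `|Φ₁⟩,…,|Φ₄⟩` as vectors in `ℂ²⊗ℂ²`
(product basis indexed by `Fin 2 × Fin 2`). -/
def bell : Fin 4 → Q2 → ℂ :=
  ![fun p => !![invSqrt2, 0; 0, invSqrt2] p.1 p.2,
    fun p => !![invSqrt2, 0; 0, -invSqrt2] p.1 p.2,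
    fun p => !![0, invSqrt2; invSqrt2, 0] p.1 p.2,
    fun p => !![0, invSqrt2; -invSqrt2, 0] p.1 p.2]

/-- The Bell projectors `Π_i = |Φ_i⟩⟨Φ_i|`. -/
def BellProj (i : Fin 4) : M4 := vecMulVec (bell i) (star (bell i))

/-- The Pauli matrices `σ_x, σ_y, σ_z`. -/
def pauli : Fin 3 → Matrix (Fin 2) (Fin 2) ℂ :=
  ![!![0, 1; 1, 0], !![0, -I; I, 0], !![1, 0; 0, -1]]

/-- Reindexing `((a',b'),(a'',b'')) ↦ ((a',a''),(b',b''))`. -/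
def swapMid : (Q2 × Q2) ≃ (Q2 × Q2) where
  toFun p := ((p.1.1, p.2.1), (p.1.2, p.2.2))
  invFun p := ((p.1.1, p.2.1), (p.1.2, p.2.2))
  left_inv _ := rfl
  right_inv _ := rfl

/-- The rank-one matrix `x x†`. -/
def pureMat {d : Type*} (x : d → ℂ) : Matrix d d ℂ := vecMulVec x (star x)

/-- Separability of a 16×16 four-qubit matrix (qubit order A',B',A'',B'')
across the partition A = (A',A''), B = (B',B''). -/
def SepAB (ρ : M16) : Prop :=
  ∃ (n : ℕ) (x y : Fin n → Q2 → ℂ),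
    (Matrix.reindex swapMid swapMid ρ) = ∑ k, (pureMat (x k)) ⊗ₖ (pureMat (y k))


/-- `ρ` can be transformed to `ρ'` by SLOCC: `ρ' = c·Σ_k (A_k⊗B_k) ρ (A_k⊗B_k)†`
for finitely many local Kraus pairs and some `c > 0`. -/
def SLOCCto (ρ ρ' : M4) : Prop :=
  ∃ (N : ℕ) (A B : Fin N → Matrix (Fin 2) (Fin 2) ℂ) (c : ℝ),
    0 < c ∧ ρ' = (c : ℂ) • ∑ k, (A k ⊗ₖ B k) * ρ * (A k ⊗ₖ B k)ᴴ

/-- `ρ` and `ρ'` are SLOCC equivalent. -/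
def SLOCCequiv (ρ ρ' : M4) : Prop := SLOCCto ρ ρ' ∧ SLOCCto ρ' ρ

/-- The Bell-diagonal state with weight vector `l`. -/
def rhoBD (l : Fin 4 → ℝ) : M4 := ∑ i, (l i : ℂ) • BellProj i

/-- `l` is a weight vector: nonnegative entries summing to `1`. -/
def IsWeight (l : Fin 4 → ℝ) : Prop := (∀ i, 0 ≤ l i) ∧ ∑ i, l i = 1

/-- `l` is ordered: `λ₁ ≥ λ₂ ≥ λ₃ ≥ λ₄`. -/
def IsOrdered (l : Fin 4 → ℝ) : Prop := l 1 ≤ l 0 ∧ l 2 ≤ l 1 ∧ l 3 ≤ l 2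

/-- A two-qubit density matrix. -/
def IsDensity (ρ : M4) : Prop := ρ.PosSemidef ∧ ρ.trace = 1

/-- Separability of a two-qubit matrix. -/
def Sep2 (ρ : M4) : Prop :=
  ∃ (N : ℕ) (x y : Fin N → Fin 2 → ℂ),
    ρ = ∑ k, (pureMat (x k)) ⊗ₖ (pureMat (y k))

/-!
In the magic basis (the Bell states with suitable phases) a local operator `A ⊗ B` becomes a matrix
`M` with `M Mᵀ = Mᵀ M = (det A · det B) • 1`. For two rows (or columns) `p, q` of `M` the vectors
`p ± i q` are isotropic, and a coordinate of an isotropic vector has at most half of the total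
squared modulus. So the squared moduli of the entries of `M` satisfy linear inequalities, and these
persist for the sum `G` over all Kraus operators, while `μ = G λ`. With
`τ = (μ₁ - 1/2) / (λ₁ - 1/2)` they give `τ ≤ 2 G₁₁ - ∑ₖ Gₖ₁`, and this bounds every entry of `μ`
below by `τ λ₄` and the sum of any two entries by `τ (λ₃ + λ₄)`. By Hahn–Banach separation, after
sorting the last three coordinates of the functional, these bounds place `μ` in the polytope.

Conversely, local unitaries permute the Bell states, measuring `|00⟩⟨00|` and preparing a mixture of
`|00⟩` and `|11⟩` yields `λ₁₂`, and the weight vectors reachable from a fixed state form a convex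
set.
-/

section Isotropic

variable {ι : Type*} [Fintype ι]

theorem two_mul_norm_sq_le_of_dotProduct_self_eq_zero {z : ι → ℂ} (hz : z ⬝ᵥ z = 0) (k : ι) :
    2 * ‖z k‖ ^ 2 ≤ ∑ i, ‖z i‖ ^ 2 := by
  classical
  have hk : z k ^ 2 = -∑ i ∈ Finset.univ.erase k, z i ^ 2 := by
    simp only [dotProduct, ← sq] at hz
    rw [← Finset.add_sum_erase _ _ (Finset.mem_univ k)] at hz
    exact eq_neg_of_add_eq_zero_left hz
  have hle : ‖z k‖ ^ 2 ≤ ∑ i ∈ Finset.univ.erase k, ‖z i‖ ^ 2 := by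
    rw [← norm_pow, hk, norm_neg]
    exact (norm_sum_le _ _).trans_eq (Finset.sum_congr rfl fun i _ => norm_pow (z i) 2)
  rw [← Finset.add_sum_erase _ _ (Finset.mem_univ k)]
  linarith

-- `p ± i q` are isotropic, and `‖p + i q‖² + ‖p - i q‖²` obeys the parallelogram law.
theorem two_mul_norm_sq_add_norm_sq_le_of_dotProduct_eq_zero {p q : ι → ℂ}
    (hpq : p ⬝ᵥ p = q ⬝ᵥ q) (horth : p ⬝ᵥ q = 0) (k : ι) :
    2 * (‖p k‖ ^ 2 + ‖q k‖ ^ 2) ≤ ∑ i, ‖p i‖ ^ 2 + ∑ i, ‖q i‖ ^ 2 := by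
  have hplus : (p + I • q) ⬝ᵥ (p + I • q) = 0 := by
    simp [horth, dotProduct_comm q p, hpq, ← mul_assoc]
  have hminus : (p - I • q) ⬝ᵥ (p - I • q) = 0 := by
    simp [horth, dotProduct_comm q p, hpq, ← mul_assoc]
  have parallelogram (i : ι) : ‖(p + I • q) i‖ ^ 2 + ‖(p - I • q) i‖ ^ 2 =
      2 * (‖p i‖ ^ 2 + ‖q i‖ ^ 2) := by
    simpa using parallelogram_law_with_norm ℂ (p i) (I • q i)
  have hsum : ∑ i, ‖(p + I • q) i‖ ^ 2 + ∑ i, ‖(p - I • q) i‖ ^ 2 =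
      2 * (∑ i, ‖p i‖ ^ 2 + ∑ i, ‖q i‖ ^ 2) := by
    simp only [← Finset.sum_add_distrib, parallelogram, Finset.mul_sum]
  have hp := two_mul_norm_sq_le_of_dotProduct_self_eq_zero hplus k
  have hm := two_mul_norm_sq_le_of_dotProduct_self_eq_zero hminus k
  linarith [parallelogram k]

-- The concatenation of `p` and `i q` is isotropic.
theorem two_mul_norm_sq_le_of_dotProduct_self_eq {κ : Type*} [Fintype κ] {p : ι → ℂ} {q : κ → ℂ}
    (hpq : p ⬝ᵥ p = q ⬝ᵥ q) (k : ι) :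
    2 * ‖p k‖ ^ 2 ≤ ∑ i, ‖p i‖ ^ 2 + ∑ i, ‖q i‖ ^ 2 := by
  have hz : Sum.elim p (I • q) ⬝ᵥ Sum.elim p (I • q) = 0 := by
    simp [hpq, ← mul_assoc]
  simpa using two_mul_norm_sq_le_of_dotProduct_self_eq_zero hz (Sum.inl k)

end Isotropic

/-- The entrywise squared modulus of a complex matrix: its entries are the transition weights
between basis states. -/
def normSqMatrix {m n : Type*} (M : Matrix m n ℂ) : Matrix m n ℝ := M.map fun z => ‖z‖ ^ 2

section OrthogonalSquare

variable {ι : Type*} [Fintype ι]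

/-- The amount by which the entry `G i j` exceeds the sum of the other entries of its column. -/
def columnExcess (G : Matrix ι ι ℝ) (i j : ι) : ℝ := 2 * G i j - ∑ k, G k j

/-- Linear inequalities satisfied by `normSqMatrix M` whenever `M * Mᵀ` and `Mᵀ * M` are the same
multiple of the identity. Unlike that property of `M`, they survive summation over Kraus
operators. -/
structure OrthogonalSquareBounds (G : Matrix ι ι ℝ) : Prop where
  nonneg (i j : ι) : 0 ≤ G i j
  column_pair {j k : ι} (hjk : j ≠ k) (i : ι) : 2 * (G i j + G i k) ≤ ∑ m, G m j + ∑ m, G m k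
  row_pair {i k : ι} (hik : i ≠ k) (j : ι) : 2 * (G i j + G k j) ≤ ∑ m, G i m + ∑ m, G k m
  columnExcess_le_row (i j k : ι) : columnExcess G i j ≤ ∑ m, G k m

theorem orthogonalSquareBounds_normSqMatrix [DecidableEq ι] {M : Matrix ι ι ℂ} {δ : ℂ}
    (hrow : M * Mᵀ = δ • 1) (hcol : Mᵀ * M = δ • 1) :
    OrthogonalSquareBounds (normSqMatrix M) := by
  have row_dot (i k : ι) : M i ⬝ᵥ M k = (δ • (1 : Matrix ι ι ℂ)) i k := by rw [← hrow]; rfl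
  have col_dot (j k : ι) : Mᵀ j ⬝ᵥ Mᵀ k = (δ • (1 : Matrix ι ι ℂ)) j k := by rw [← hcol]; rfl
  refine ⟨fun i j => sq_nonneg ‖M i j‖, fun {j k} hjk i => ?_, fun {i k} hik j => ?_,
    fun i j k => ?_⟩
  · exact two_mul_norm_sq_add_norm_sq_le_of_dotProduct_eq_zero (p := Mᵀ j) (q := Mᵀ k)
      (by simp [col_dot]) (by simp [col_dot, hjk]) i
  · exact two_mul_norm_sq_add_norm_sq_le_of_dotProduct_eq_zero (p := M i) (q := M k)
      (by simp [row_dot]) (by simp [row_dot, hik]) j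
  · have hle := two_mul_norm_sq_le_of_dotProduct_self_eq (p := Mᵀ j) (q := M k)
      (by simp [row_dot, col_dot]) i
    exact sub_le_iff_le_add'.2 hle

namespace OrthogonalSquareBounds

variable {G H : Matrix ι ι ℝ}

theorem zero : OrthogonalSquareBounds (0 : Matrix ι ι ℝ) := by
  constructor <;> simp [columnExcess]

theorem add (hG : OrthogonalSquareBounds G) (hH : OrthogonalSquareBounds H) :
    OrthogonalSquareBounds (G + H) := by
  refine ⟨fun i j => add_nonneg (hG.nonneg i j) (hH.nonneg i j), fun hjk i => ?_, fun hik j => ?_,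
    fun i j k => ?_⟩
  · simp only [Matrix.add_apply, Finset.sum_add_distrib]
    linarith [hG.column_pair hjk i, hH.column_pair hjk i]
  · simp only [Matrix.add_apply, Finset.sum_add_distrib]
    linarith [hG.row_pair hik j, hH.row_pair hik j]
  · have hGk := hG.columnExcess_le_row i j k
    have hHk := hH.columnExcess_le_row i j k
    simp only [columnExcess, Matrix.add_apply, Finset.sum_add_distrib] at hGk hHk ⊢
    linarith

theorem sum {κ : Type*} {s : Finset κ} {F : κ → Matrix ι ι ℝ}
    (hF : ∀ k ∈ s, OrthogonalSquareBounds (F k)) : OrthogonalSquareBounds (∑ k ∈ s, F k) :=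
  Finset.sum_induction F OrthogonalSquareBounds (fun _ _ => add) zero hF

variable {l : ι → ℝ}

-- Average the inequalities `column_pair` for the columns `j` and `k` with the weights `l k`.
theorem two_mul_mulVec_sub_sum_le (hG : OrthogonalSquareBounds G) (hl : 0 ≤ l)
    (hsum : ∑ k, l k = 1) (i j : ι) :
    2 * (G *ᵥ l) i - ∑ m, (G *ᵥ l) m ≤ (2 * l j - 1) * columnExcess G i j := by
  classical
  let gap (k : ι) : ℝ := l k * (∑ m, G m j + ∑ m, G m k - 2 * (G i j + G i k))
  have gap_self_le : gap j ≤ ∑ k, gap k := by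
    rw [← Finset.add_sum_erase _ _ (Finset.mem_univ j)]
    refine le_add_of_nonneg_right (Finset.sum_nonneg fun k hk => mul_nonneg (hl k) ?_)
    exact sub_nonneg.2 (hG.column_pair (Finset.ne_of_mem_erase hk).symm i)
  have sum_mulVec : ∑ m, (G *ᵥ l) m = ∑ k, l k * ∑ m, G m k := by
    simp only [mulVec, dotProduct, Finset.mul_sum]
    rw [Finset.sum_comm]
    simp only [mul_comm]
  have sum_gap : ∑ k, gap k =
      ∑ m, (G *ᵥ l) m - 2 * (G *ᵥ l) i - columnExcess G i j := by
    calc ∑ k, gap k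
        = ∑ k, (l k * ∑ m, G m k - 2 * (G i k * l k) - l k * columnExcess G i j) :=
          Finset.sum_congr rfl fun k _ => by simp only [gap, columnExcess]; ring
      _ = ∑ m, (G *ᵥ l) m - 2 * (G *ᵥ l) i - columnExcess G i j := by
          rw [Finset.sum_sub_distrib, Finset.sum_sub_distrib, ← Finset.mul_sum, ← Finset.sum_mul,
            hsum, one_mul, sum_mulVec]
          rfl
  have gap_self : gap j = -(2 * l j * columnExcess G i j) := by
    simp only [gap, columnExcess]
    ring
  linarith

theorem columnExcess_mul_le_mulVec_self (hG : OrthogonalSquareBounds G) (hl : 0 ≤ l) (i j : ι) :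
    columnExcess G i j * l j ≤ (G *ᵥ l) i := by
  have hexcess : columnExcess G i j ≤ G i j := by
    have := Finset.single_le_sum (fun m _ => hG.nonneg m j) (Finset.mem_univ i)
    simp only [columnExcess]
    linarith
  calc columnExcess G i j * l j ≤ G i j * l j := mul_le_mul_of_nonneg_right hexcess (hl j)
    _ ≤ (G *ᵥ l) i := Finset.single_le_sum (f := fun k => G i k * l k)
        (fun k _ => mul_nonneg (hG.nonneg i k) (hl k)) (Finset.mem_univ j)

theorem columnExcess_mul_le_mulVec (hG : OrthogonalSquareBounds G) {b : ℝ} (hb : 0 ≤ b)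
    (hbl : ∀ k, b ≤ l k) (i j m : ι) : columnExcess G i j * b ≤ (G *ᵥ l) m :=
  calc columnExcess G i j * b
      ≤ (∑ k, G m k) * b := mul_le_mul_of_nonneg_right (hG.columnExcess_le_row i j m) hb
    _ = ∑ k, G m k * b := Finset.sum_mul ..
    _ ≤ (G *ᵥ l) m :=
        Finset.sum_le_sum fun k _ => mul_le_mul_of_nonneg_left (hbl k) (hG.nonneg m k)

theorem columnExcess_mul_add_le_mulVec_add_mulVec (hG : OrthogonalSquareBounds G) {b : ℝ} {k : ι}
    (hbk : 0 ≤ b + l k) (hkb : l k ≤ b) (hbl : ∀ n, n ≠ k → b ≤ l n) {m m' : ι} (hm : m ≠ m')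
    (i j : ι) : columnExcess G i j * (b + l k) ≤ (G *ᵥ l) m + (G *ᵥ l) m' := by
  classical
  have mulVec_ge (r : ι) : b * ∑ n, G r n - (b - l k) * G r k ≤ (G *ᵥ l) r := by
    have hrest : ∑ n ∈ Finset.univ.erase k, b * G r n ≤ ∑ n ∈ Finset.univ.erase k, G r n * l n :=
      Finset.sum_le_sum fun n hn => by
        rw [mul_comm b]
        exact mul_le_mul_of_nonneg_left (hbl n (Finset.ne_of_mem_erase hn)) (hG.nonneg r n)
    rw [mulVec, dotProduct, Finset.mul_sum, ← Finset.add_sum_erase _ _ (Finset.mem_univ k),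
      ← Finset.add_sum_erase _ (fun n => G r n * l n) (Finset.mem_univ k)]
    linarith
  have hrow : (b - l k) * (2 * (G m k + G m' k)) ≤ (b - l k) * (∑ n, G m n + ∑ n, G m' n) :=
    mul_le_mul_of_nonneg_left (hG.row_pair hm k) (sub_nonneg.2 hkb)
  have hexcess : columnExcess G i j * (b + l k) * 2 ≤ (∑ n, G m n + ∑ n, G m' n) * (b + l k) := by
    have := add_le_add (hG.columnExcess_le_row i j m) (hG.columnExcess_le_row i j m')
    linarith [mul_le_mul_of_nonneg_right this hbk]
  linarith [mulVec_ge m, mulVec_ge m']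

end OrthogonalSquareBounds

end OrthogonalSquare

section SLOCC

variable {ρ ρ₁ ρ₂ ρ₃ : M4}

theorem sloccTo_iff_exists_kraus :
    SLOCCto ρ₁ ρ₂ ↔ ∃ (N : ℕ) (A B : Fin N → Matrix (Fin 2) (Fin 2) ℂ),
      ρ₂ = ∑ k, (A k ⊗ₖ B k) * ρ₁ * (A k ⊗ₖ B k)ᴴ := by
  constructor
  · rintro ⟨N, A, B, c, hc, hρ⟩
    refine ⟨N, fun k => (√c : ℂ) • A k, B, ?_⟩
    simp [hρ, Finset.smul_sum, smul_kronecker, smul_smul, Real.mul_self_sqrt hc.le]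
  · rintro ⟨N, A, B, hρ⟩
    exact ⟨N, A, B, 1, one_pos, by simpa using hρ⟩

theorem sloccTo_sum_kraus {κ : Type*} [Fintype κ] (A B : κ → Matrix (Fin 2) (Fin 2) ℂ) (ρ : M4) :
    SLOCCto ρ (∑ k, (A k ⊗ₖ B k) * ρ * (A k ⊗ₖ B k)ᴴ) := by
  let e := (Fintype.equivFin κ).symm
  exact sloccTo_iff_exists_kraus.2 ⟨Fintype.card κ, A ∘ e, B ∘ e, (e.sum_comp _).symm⟩

theorem sloccTo_conj (A B : Matrix (Fin 2) (Fin 2) ℂ) (ρ : M4) :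
    SLOCCto ρ ((A ⊗ₖ B) * ρ * (A ⊗ₖ B)ᴴ) := by
  simpa using sloccTo_sum_kraus (fun _ : Unit => A) (fun _ => B) ρ

theorem sloccTo_single (p q : Q2) (ρ : M4) : SLOCCto ρ (single q q (ρ p p)) := by
  simpa [single_kronecker_single, conjTranspose_single, single_mul_mul_single] using
    sloccTo_conj (single q.1 p.1 1) (single q.2 p.2 1) ρ

namespace SLOCCto

theorem refl (ρ : M4) : SLOCCto ρ ρ := by
  simpa using sloccTo_conj 1 1 ρ

theorem trans (h₁₂ : SLOCCto ρ₁ ρ₂) (h₂₃ : SLOCCto ρ₂ ρ₃) : SLOCCto ρ₁ ρ₃ := by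
  obtain ⟨N, A, B, rfl⟩ := sloccTo_iff_exists_kraus.1 h₁₂
  obtain ⟨N', A', B', rfl⟩ := sloccTo_iff_exists_kraus.1 h₂₃
  simpa [Fintype.sum_prod_type, mul_kronecker_mul, Matrix.mul_sum, Matrix.sum_mul,
    Matrix.mul_assoc] using
    sloccTo_sum_kraus (fun k : Fin N' × Fin N => A' k.1 * A k.2) (fun k => B' k.1 * B k.2) ρ₁

theorem add (h₁ : SLOCCto ρ ρ₁) (h₂ : SLOCCto ρ ρ₂) : SLOCCto ρ (ρ₁ + ρ₂) := by
  obtain ⟨N, A, B, rfl⟩ := sloccTo_iff_exists_kraus.1 h₁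
  obtain ⟨N', A', B', rfl⟩ := sloccTo_iff_exists_kraus.1 h₂
  simpa using sloccTo_sum_kraus (Sum.elim A A') (Sum.elim B B') ρ

theorem smul {a : ℝ} (ha : 0 ≤ a) (h : SLOCCto ρ₁ ρ₂) : SLOCCto ρ₁ ((a : ℂ) • ρ₂) := by
  rcases ha.eq_or_lt with rfl | ha
  · simpa using sloccTo_conj 0 0 ρ₁
  · obtain ⟨N, A, B, c, hc, rfl⟩ := h
    exact ⟨N, A, B, a * c, mul_pos ha hc, by rw [smul_smul, ofReal_mul]⟩

end SLOCCto

end SLOCC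

section MagicBasis

/-- The phases `1, i, i, 1` turning the Bell states into the magic basis. -/
def magicPhase : Fin 4 → ℂ := ![1, I, I, 1]

/-- The matrix whose columns are the magic basis, that is, the Bell states rephased so that
`magicBasis_mul_transpose` holds. -/
def magicBasis : Matrix Q2 (Fin 4) ℂ := of fun p i => magicPhase i * bell i p

/-- The alternating form on `ℂ²`, which is `i σ_y`. -/
def spinFlip : Matrix (Fin 2) (Fin 2) ℂ := !![0, 1; -1, 0]

theorem invSqrt2_mul_self : invSqrt2 * invSqrt2 = 1 / 2 := by
  rw [invSqrt2, ← ofReal_mul, ← mul_inv, Real.mul_self_sqrt zero_le_two]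
  norm_num

theorem conj_invSqrt2 : (starRingEnd ℂ) invSqrt2 = invSqrt2 := conj_ofReal _

theorem magicPhase_mul_conj (i : Fin 4) : magicPhase i * (starRingEnd ℂ) (magicPhase i) = 1 := by
  fin_cases i <;> simp [magicPhase]

theorem conjTranspose_magicBasis_mul : magicBasisᴴ * magicBasis = 1 := by
  ext i j
  fin_cases i <;> fin_cases j <;>
    simp [magicBasis, magicPhase, bell, Matrix.mul_apply, Fintype.sum_prod_type, conj_invSqrt2] <;>
    grind [invSqrt2_mul_self, I_mul_I]

theorem magicBasis_mul_transpose : magicBasis * magicBasisᵀ = spinFlip ⊗ₖ spinFlip := by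
  ext ⟨a, b⟩ ⟨a', b'⟩
  fin_cases a <;> fin_cases b <;> fin_cases a' <;> fin_cases b' <;>
    simp [magicBasis, magicPhase, bell, spinFlip, Matrix.mul_apply, Fin.sum_univ_four] <;>
    grind [invSqrt2_mul_self, I_mul_I]

theorem transpose_magicBasis_mul_conj : magicBasisᵀ * magicBasisᴴᵀ = 1 := by
  rw [← transpose_mul, conjTranspose_magicBasis_mul, transpose_one]

theorem conjTranspose_spinFlip : spinFlipᴴ = -spinFlip := by
  ext i j
  fin_cases i <;> fin_cases j <;> simp [spinFlip]

theorem conj_magicBasis_mul_conjTranspose :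
    magicBasisᴴᵀ * magicBasisᴴ = spinFlip ⊗ₖ spinFlip :=
  calc magicBasisᴴᵀ * magicBasisᴴ = (magicBasis * magicBasisᵀ)ᴴ := by rw [conjTranspose_mul]; rfl
    _ = spinFlip ⊗ₖ spinFlip := by
      rw [magicBasis_mul_transpose, conjTranspose_kronecker, conjTranspose_spinFlip]
      ext
      simp

theorem mul_spinFlip_mul_transpose (A : Matrix (Fin 2) (Fin 2) ℂ) :
    A * spinFlip * Aᵀ = A.det • spinFlip := by
  ext i j
  fin_cases i <;> fin_cases j <;>
    simp [spinFlip, Matrix.mul_apply, Fin.sum_univ_two, det_fin_two] <;> ring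

theorem kronecker_mul_spinFlip_mul_transpose (A B : Matrix (Fin 2) (Fin 2) ℂ) :
    (A ⊗ₖ B) * (spinFlip ⊗ₖ spinFlip) * (A ⊗ₖ B)ᵀ =
      (A.det * B.det) • (spinFlip ⊗ₖ spinFlip) := by
  rw [← kroneckerMap_transpose, ← mul_kronecker_mul, ← mul_kronecker_mul,
    mul_spinFlip_mul_transpose, mul_spinFlip_mul_transpose, smul_kronecker, kronecker_smul,
    smul_smul]

/-- The matrix of `K` in the magic basis. -/
def magicMatrix (K : M4) : Matrix (Fin 4) (Fin 4) ℂ := magicBasisᴴ * K * magicBasis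

theorem magicMatrix_kronecker_mul_transpose (A B : Matrix (Fin 2) (Fin 2) ℂ) :
    magicMatrix (A ⊗ₖ B) * (magicMatrix (A ⊗ₖ B))ᵀ = (A.det * B.det) • 1 :=
  calc magicMatrix (A ⊗ₖ B) * (magicMatrix (A ⊗ₖ B))ᵀ
      = magicBasisᴴ * ((A ⊗ₖ B) * (magicBasis * magicBasisᵀ) * (A ⊗ₖ B)ᵀ) * magicBasisᴴᵀ := by
        simp only [magicMatrix, transpose_mul, Matrix.mul_assoc]
    _ = (A.det * B.det) • ((magicBasisᴴ * magicBasis) * (magicBasisᵀ * magicBasisᴴᵀ)) := by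
        rw [magicBasis_mul_transpose, kronecker_mul_spinFlip_mul_transpose,
          ← magicBasis_mul_transpose]
        simp only [Matrix.mul_smul, Matrix.smul_mul, Matrix.mul_assoc]
    _ = (A.det * B.det) • 1 := by
        rw [conjTranspose_magicBasis_mul, transpose_magicBasis_mul_conj, Matrix.mul_one]

theorem transpose_magicMatrix_kronecker_mul (A B : Matrix (Fin 2) (Fin 2) ℂ) :
    (magicMatrix (A ⊗ₖ B))ᵀ * magicMatrix (A ⊗ₖ B) = (A.det * B.det) • 1 :=
  calc (magicMatrix (A ⊗ₖ B))ᵀ * magicMatrix (A ⊗ₖ B)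
      = magicBasisᵀ * ((Aᵀ ⊗ₖ Bᵀ) * (magicBasisᴴᵀ * magicBasisᴴ) * (Aᵀ ⊗ₖ Bᵀ)ᵀ) *
          magicBasis := by
        simp only [magicMatrix, transpose_mul, ← kroneckerMap_transpose, transpose_transpose,
          Matrix.mul_assoc]
    _ = (A.det * B.det) • ((magicBasisᵀ * magicBasisᴴᵀ) * (magicBasisᴴ * magicBasis)) := by
        rw [conj_magicBasis_mul_conjTranspose, kronecker_mul_spinFlip_mul_transpose,
          ← conj_magicBasis_mul_conjTranspose]
        simp only [Matrix.mul_smul, Matrix.smul_mul, Matrix.mul_assoc, det_transpose]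
    _ = (A.det * B.det) • 1 := by
        rw [conjTranspose_magicBasis_mul, transpose_magicBasis_mul_conj, Matrix.mul_one]

theorem rhoBD_eq_magicBasis_mul_diagonal (l : Fin 4 → ℝ) :
    rhoBD l = magicBasis * diagonal (fun i => (l i : ℂ)) * magicBasisᴴ := by
  ext p q
  rw [rhoBD, Matrix.sum_apply, Matrix.mul_apply]
  simp only [mul_diagonal, conjTranspose_apply, magicBasis, of_apply, star_mul', Matrix.smul_apply,
    BellProj, vecMulVec_apply, Pi.star_apply, smul_eq_mul, star_def]
  refine Finset.sum_congr rfl fun i _ => ?_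
  linear_combination -(l i * bell i p * (starRingEnd ℂ) (bell i q)) * magicPhase_mul_conj i

theorem mul_diagonal_mul_conjTranspose_apply_self {m n : Type*} [Fintype n] [DecidableEq n]
    (M : Matrix m n ℂ) (l : n → ℝ) (i : m) :
    (M * diagonal (fun j => (l j : ℂ)) * Mᴴ) i i = ((normSqMatrix M *ᵥ l) i : ℝ) := by
  rw [Matrix.mul_apply]
  simp only [mul_diagonal, conjTranspose_apply, mulVec, dotProduct, ofReal_sum, ofReal_mul,
    normSqMatrix, map_apply, ofReal_pow]
  refine Finset.sum_congr rfl fun j _ => ?_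
  rw [mul_right_comm, ← mul_conj']
  rfl

theorem exists_orthogonalSquareBounds_of_sloccTo {l μ : Fin 4 → ℝ}
    (h : SLOCCto (rhoBD l) (rhoBD μ)) :
    ∃ G : Matrix (Fin 4) (Fin 4) ℝ, OrthogonalSquareBounds G ∧ μ = G *ᵥ l := by
  obtain ⟨N, A, B, hμ⟩ := sloccTo_iff_exists_kraus.1 h
  let M (k : Fin N) := magicMatrix (A k ⊗ₖ B k)
  refine ⟨∑ k, normSqMatrix (M k),
    .sum fun k _ => orthogonalSquareBounds_normSqMatrix
      (magicMatrix_kronecker_mul_transpose (A k) (B k))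
      (transpose_magicMatrix_kronecker_mul (A k) (B k)), ?_⟩
  have diagonal_eq : diagonal (fun i => (μ i : ℂ)) =
      ∑ k, M k * diagonal (fun i => (l i : ℂ)) * (M k)ᴴ :=
    calc diagonal (fun i => (μ i : ℂ))
        = (magicBasisᴴ * magicBasis) * diagonal (fun i => (μ i : ℂ)) *
            (magicBasisᴴ * magicBasis) := by
          rw [conjTranspose_magicBasis_mul, Matrix.one_mul, Matrix.mul_one]
      _ = magicBasisᴴ * rhoBD μ * magicBasis := by
          simp only [rhoBD_eq_magicBasis_mul_diagonal, Matrix.mul_assoc]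
      _ = ∑ k, M k * diagonal (fun i => (l i : ℂ)) * (M k)ᴴ := by
          simp only [hμ, rhoBD_eq_magicBasis_mul_diagonal, M, magicMatrix, Matrix.mul_sum,
            Matrix.sum_mul, conjTranspose_mul, conjTranspose_conjTranspose, Matrix.mul_assoc]
  ext i
  have diagonal_entry := congrFun₂ diagonal_eq i i
  simp only [diagonal_apply_eq, Matrix.sum_apply, mul_diagonal_mul_conjTranspose_apply_self]
    at diagonal_entry
  rw [Matrix.sum_mulVec, Finset.sum_apply]
  exact_mod_cast diagonal_entry

end MagicBasis

/-- The weights of the equal mixture of the Bell states with indices `0` and `k`; indices start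
at `0`, so for `k ≠ 0` this is the separable vector `λ_{1,k+1}`. -/
def edgeMidpoint (k : Fin 4) : Fin 4 → ℝ := (1 / 2 : ℝ) • (Pi.single 0 1 + Pi.single k 1)

/-- The extreme weight vectors reachable from `l`: permutations of `l` that fix the first entry,
and the separable vectors `λ_{12}`, `λ_{13}`, `λ_{14}`. -/
def sloccVertices (l : Fin 4 → ℝ) : Set (Fin 4 → ℝ) :=
  {v | ∃ σ : Equiv.Perm (Fin 4), σ 0 = 0 ∧ v = l ∘ σ} ∪ edgeMidpoint '' {0}ᶜ

theorem edgeMidpoint_comp_perm {σ : Equiv.Perm (Fin 4)} (hσ : σ 0 = 0) (k : Fin 4) :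
    edgeMidpoint (σ k) ∘ σ = edgeMidpoint k := by
  ext i
  have h0 : σ i = 0 ↔ i = 0 := by simpa [hσ] using σ.injective.eq_iff (a := i) (b := 0)
  simp [edgeMidpoint, Pi.single_apply, h0, mul_add]

theorem image_edgeMidpoint_compl_zero :
    edgeMidpoint '' {0}ᶜ = {![1/2, 1/2, 0, 0], ![1/2, 0, 1/2, 0], ![1/2, 0, 0, 1/2]} := by
  have h1 : edgeMidpoint 1 = ![1/2, 1/2, 0, 0] := by
    ext i; fin_cases i <;> simp [edgeMidpoint]
  have h2 : edgeMidpoint 2 = ![1/2, 0, 1/2, 0] := by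
    ext i; fin_cases i <;> simp [edgeMidpoint]
  have h3 : edgeMidpoint 3 = ![1/2, 0, 0, 1/2] := by
    ext i; fin_cases i <;> simp [edgeMidpoint]
  have hcompl : ({0}ᶜ : Set (Fin 4)) = {1, 2, 3} := by ext i; fin_cases i <;> simp
  rw [hcompl, Set.image_insert_eq, Set.image_pair, h1, h2, h3]

section Achievability

theorem rhoBD_smul_add_smul (a b : ℝ) (x y : Fin 4 → ℝ) :
    rhoBD (a • x + b • y) = (a : ℂ) • rhoBD x + (b : ℂ) • rhoBD y := by
  simp only [rhoBD, Finset.smul_sum, ← Finset.sum_add_distrib, smul_smul, ← add_smul]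
  simp

theorem convex_setOf_sloccTo_rhoBD (ρ : M4) : Convex ℝ {μ | SLOCCto ρ (rhoBD μ)} := by
  intro x hx y hy a b ha hb _
  rw [Set.mem_ofPred_eq, rhoBD_smul_add_smul]
  exact (hx.smul ha).add (hy.smul hb)

theorem conj_rhoBD_of_mulVec_bell {K : M4} {σ : Equiv.Perm (Fin 4)} {z : Fin 4 → ℂ}
    (hz : ∀ i, z i * star (z i) = 1) (hK : ∀ i, K *ᵥ bell i = z i • bell (σ i)) (μ : Fin 4 → ℝ) :
    K * rhoBD (μ ∘ σ) * Kᴴ = rhoBD μ := by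
  have conj_bellProj (i : Fin 4) : K * BellProj i * Kᴴ = BellProj (σ i) := by
    rw [BellProj, mul_vecMulVec, vecMulVec_mul, ← star_mulVec, hK, star_smul, smul_vecMulVec,
      vecMulVec_smul, smul_smul, hz, one_smul, BellProj]
  rw [rhoBD, rhoBD, Matrix.mul_sum, Matrix.sum_mul,
    ← Equiv.sum_comp σ fun i => (μ i : ℂ) • BellProj i]
  simp only [Matrix.mul_smul, Matrix.smul_mul, conj_bellProj, Function.comp_apply]

theorem sloccTo_rhoBD_of_mulVec_bell {A B : Matrix (Fin 2) (Fin 2) ℂ}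
    {σ : Equiv.Perm (Fin 4)} {z : Fin 4 → ℂ} (hz : ∀ i, z i * star (z i) = 1)
    (hAB : ∀ i, (A ⊗ₖ B) *ᵥ bell i = z i • bell (σ i)) (μ : Fin 4 → ℝ) :
    SLOCCto (rhoBD (μ ∘ σ)) (rhoBD μ) := by
  simpa only [conj_rhoBD_of_mulVec_bell hz hAB] using sloccTo_conj A B (rhoBD (μ ∘ σ))

theorem sloccTo_rhoBD_of_comp_swap_zero_one (μ : Fin 4 → ℝ) :
    SLOCCto (rhoBD (μ ∘ Equiv.swap 0 1)) (rhoBD μ) := by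
  refine sloccTo_rhoBD_of_mulVec_bell (A := !![1, 0; 0, I]) (B := !![1, 0; 0, I])
    (z := ![1, 1, I, I]) (fun i => by fin_cases i <;> simp) (fun i => ?_) μ
  ext ⟨a, b⟩
  fin_cases i <;> fin_cases a <;> fin_cases b <;>
    simp [bell, mulVec, dotProduct, Fintype.sum_prod_type, Equiv.swap_apply_def]

theorem sloccTo_rhoBD_of_comp_swap_one_two (μ : Fin 4 → ℝ) :
    SLOCCto (rhoBD (μ ∘ Equiv.swap 1 2)) (rhoBD μ) := by
  refine sloccTo_rhoBD_of_mulVec_bell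
    (A := !![invSqrt2, invSqrt2; invSqrt2, -invSqrt2])
    (B := !![invSqrt2, invSqrt2; invSqrt2, -invSqrt2])
    (z := ![1, 1, 1, -1]) (fun i => by fin_cases i <;> simp) (fun i => ?_) μ
  ext ⟨a, b⟩
  fin_cases i <;> fin_cases a <;> fin_cases b <;>
    simp [bell, mulVec, dotProduct, Fintype.sum_prod_type, Equiv.swap_apply_def] <;>
    grind [invSqrt2_mul_self]

theorem sloccTo_rhoBD_of_comp_swap_two_three (μ : Fin 4 → ℝ) :
    SLOCCto (rhoBD (μ ∘ Equiv.swap 2 3)) (rhoBD μ) := by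
  refine sloccTo_rhoBD_of_mulVec_bell (A := !![1, 0; 0, I]) (B := !![1, 0; 0, -I])
    (z := ![1, 1, -I, -I]) (fun i => by fin_cases i <;> simp) (fun i => ?_) μ
  ext ⟨a, b⟩
  fin_cases i <;> fin_cases a <;> fin_cases b <;>
    simp [bell, mulVec, dotProduct, Fintype.sum_prod_type, Equiv.swap_apply_def]

theorem sloccTo_rhoBD_of_comp_perm (σ : Equiv.Perm (Fin 4)) (μ : Fin 4 → ℝ) :
    SLOCCto (rhoBD (μ ∘ σ)) (rhoBD μ) := by
  have hσ : σ ∈ Submonoid.closure (Set.range fun i : Fin 3 => Equiv.swap i.castSucc i.succ) := by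
    rw [Equiv.Perm.mclosure_swap_castSucc_succ]
    trivial
  induction hσ using Submonoid.closure_induction generalizing μ with
  | mem _ h =>
    obtain ⟨i, rfl⟩ := h
    fin_cases i
    · exact sloccTo_rhoBD_of_comp_swap_zero_one μ
    · exact sloccTo_rhoBD_of_comp_swap_one_two μ
    · exact sloccTo_rhoBD_of_comp_swap_two_three μ
  | one => exact SLOCCto.refl _
  | mul σ τ _ _ ihσ ihτ => exact (ihτ (μ ∘ σ)).trans (ihσ μ)

theorem sloccTo_rhoBD_comp_perm (σ : Equiv.Perm (Fin 4)) (μ : Fin 4 → ℝ) :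
    SLOCCto (rhoBD μ) (rhoBD (μ ∘ σ)) := by
  simpa [Function.comp_assoc] using sloccTo_rhoBD_of_comp_perm σ⁻¹ (μ ∘ σ)

theorem rhoBD_apply_zero_zero (l : Fin 4 → ℝ) : rhoBD l (0, 0) (0, 0) = ((l 0 + l 1) / 2 : ℝ) := by
  simp [rhoBD, BellProj, bell, Fin.sum_univ_four, Matrix.sum_apply, vecMulVec_apply, conj_invSqrt2,
    invSqrt2_mul_self, div_eq_mul_inv, add_mul]

theorem rhoBD_edgeMidpoint_one : rhoBD (edgeMidpoint 1) =
    (1 / 2 : ℂ) • (single (0, 0) (0, 0) 1 + single (1, 1) (1, 1) 1) := by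
  ext ⟨a, b⟩ ⟨a', b'⟩
  fin_cases a <;> fin_cases b <;> fin_cases a' <;> fin_cases b' <;>
    simp [rhoBD, edgeMidpoint, BellProj, bell, Fin.sum_univ_four, Matrix.sum_apply,
      vecMulVec_apply, conj_invSqrt2, invSqrt2_mul_self] <;> norm_num

-- Measure `|00⟩⟨00|` and prepare `|00⟩` or `|11⟩`.
theorem sloccTo_rhoBD_edgeMidpoint_one {l : Fin 4 → ℝ} (hl : 0 < l 0 + l 1) :
    SLOCCto (rhoBD l) (rhoBD (edgeMidpoint 1)) := by
  have hprepared := ((sloccTo_single (0, 0) (0, 0) (rhoBD l)).add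
    (sloccTo_single (0, 0) (1, 1) (rhoBD l))).smul (inv_nonneg.2 hl.le)
  have hne : (l 0 + l 1 : ℂ) ≠ 0 := by exact_mod_cast hl.ne'
  convert hprepared using 1
  rw [rhoBD_edgeMidpoint_one, rhoBD_apply_zero_zero]
  simp only [smul_add, smul_single, smul_eq_mul]
  congr 2 <;> push_cast <;> field_simp

theorem sloccTo_rhoBD_edgeMidpoint {l : Fin 4 → ℝ} (hl : 0 < l 0 + l 1) {k : Fin 4} (hk : k ≠ 0) :
    SLOCCto (rhoBD l) (rhoBD (edgeMidpoint k)) := by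
  have hswap : edgeMidpoint 1 ∘ Equiv.swap 1 k = edgeMidpoint k := by
    simpa using edgeMidpoint_comp_perm (Equiv.swap_apply_of_ne_of_ne (by decide) hk.symm) k
  rw [← hswap]
  exact (sloccTo_rhoBD_edgeMidpoint_one hl).trans (sloccTo_rhoBD_comp_perm _ _)

theorem sloccTo_of_mem_convexHull {l μ : Fin 4 → ℝ} (hl : 0 < l 0 + l 1)
    (hμ : μ ∈ convexHull ℝ (sloccVertices l)) : SLOCCto (rhoBD l) (rhoBD μ) := by
  refine convexHull_min ?_ (convex_setOf_sloccTo_rhoBD (rhoBD l)) hμ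
  rintro v (⟨σ, -, rfl⟩ | ⟨k, hk, rfl⟩)
  · exact sloccTo_rhoBD_comp_perm σ l
  · exact sloccTo_rhoBD_edgeMidpoint hl hk

end Achievability

section ConvexHull

theorem mem_convexHull_of_forall_dotProduct_le {ι : Type*} [Fintype ι] {s : Set (ι → ℝ)}
    (hs : s.Finite) {x : ι → ℝ} (h : ∀ w : ι → ℝ, ∃ v ∈ convexHull ℝ s, w ⬝ᵥ x ≤ w ⬝ᵥ v) :
    x ∈ convexHull ℝ s := by
  classical
  by_contra hx
  obtain ⟨f, u, hfs, hfx⟩ := geometric_hahn_banach_closed_point (convex_convexHull ℝ s)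
    (hs.isClosed_convexHull ℝ) hx
  let w (i : ι) : ℝ := f fun j => if i = j then 1 else 0
  have f_eq (v : ι → ℝ) : f v = w ⬝ᵥ v :=
    (f.toLinearMap.pi_apply_eq_sum_univ v).trans (dotProduct_comm v w)
  obtain ⟨v, hv, hle⟩ := h w
  have hfv := hfs v hv
  rw [f_eq] at hfv hfx
  linarith

theorem exists_perm_antitone_tail {α : Type*} [LinearOrder α] {n : ℕ} (w : Fin (n + 1) → α) :
    ∃ σ : Equiv.Perm (Fin (n + 1)), σ 0 = 0 ∧ Antitone fun i : Fin n => w (σ i.succ) := by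
  let tail (i : Fin n) : αᵒᵈ := OrderDual.toDual (w i.succ)
  refine ⟨Equiv.Perm.decomposeFin.symm (0, Tuple.sort tail), by simp, fun i j hij => ?_⟩
  simpa using! Tuple.monotone_sort tail hij

-- Summation by parts in the decreasing weights `w 1 ≥ w 2 ≥ w 3`.
theorem dotProduct_le_of_tail_sums_le {w l x : Fin 4 → ℝ} {τ : ℝ} (hw₁₂ : w 2 ≤ w 1)
    (hw₂₃ : w 3 ≤ w 2) (hl : ∑ i, l i = 1) (hx : ∑ i, x i = 1)
    (hx₀ : x 0 = τ * l 0 + (1 - τ) * (1 / 2)) (hx₃ : τ * l 3 ≤ x 3)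
    (hx₂₃ : τ * (l 2 + l 3) ≤ x 2 + x 3) :
    w ⬝ᵥ x ≤ w ⬝ᵥ (τ • l + (1 - τ) • edgeMidpoint 1) := by
  have hedge : w ⬝ᵥ edgeMidpoint 1 = (w 0 + w 1) / 2 := by
    rw [edgeMidpoint, dotProduct_smul, dotProduct_add, dotProduct_single_one,
      dotProduct_single_one, smul_eq_mul, one_div_mul_eq_div]
  rw [dotProduct_add, dotProduct_smul, dotProduct_smul, hedge]
  simp only [dotProduct, Fin.sum_univ_four, smul_eq_mul] at hl hx ⊢
  have hx₁ : x 1 = τ * l 1 + (1 - τ) * (1 / 2) + (τ * (l 2 + l 3) - (x 2 + x 3)) := by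
    linear_combination hx - hx₀ - τ * hl
  rw [hx₀, hx₁]
  linarith [mul_le_mul_of_nonneg_left hx₂₃ (sub_nonneg.2 hw₁₂),
    mul_le_mul_of_nonneg_left hx₃ (sub_nonneg.2 hw₂₃)]

theorem finite_sloccVertices (l : Fin 4 → ℝ) : (sloccVertices l).Finite := by
  refine .union ((Set.finite_range fun σ : Equiv.Perm (Fin 4) => l ∘ σ).subset ?_)
    (Set.toFinite _)
  rintro v ⟨σ, -, rfl⟩
  exact ⟨σ, rfl⟩

theorem mem_convexHull_sloccVertices {l μ : Fin 4 → ℝ} {τ : ℝ} (hτ : τ ∈ Set.Icc 0 1)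
    (hl : ∑ i, l i = 1) (hμ : ∑ i, μ i = 1) (hμ₀ : μ 0 = τ * l 0 + (1 - τ) * (1 / 2))
    (hμ₁ : ∀ m, τ * l 3 ≤ μ m) (hμ₂ : ∀ m n, m ≠ n → τ * (l 2 + l 3) ≤ μ m + μ n) :
    μ ∈ convexHull ℝ (sloccVertices l) := by
  refine mem_convexHull_of_forall_dotProduct_le (finite_sloccVertices l) fun w => ?_
  obtain ⟨σ, hσ, hanti⟩ := exists_perm_antitone_tail w
  have hperm : l ∘ σ.symm ∈ sloccVertices l :=
    .inl ⟨σ.symm, by rw [Equiv.symm_apply_eq, hσ], rfl⟩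
  have hedge : edgeMidpoint (σ 1) ∈ sloccVertices l :=
    .inr ⟨σ 1, fun h => by simpa using σ.injective (h.trans hσ.symm), rfl⟩
  refine ⟨τ • (l ∘ σ.symm) + (1 - τ) • edgeMidpoint (σ 1),
    convex_convexHull ℝ _ (subset_convexHull ℝ _ hperm) (subset_convexHull ℝ _ hedge) hτ.1
      (sub_nonneg.2 hτ.2) (by ring), ?_⟩
  have hcomp : (τ • (l ∘ σ.symm) + (1 - τ) • edgeMidpoint (σ 1)) ∘ σ =
      τ • l + (1 - τ) • edgeMidpoint 1 := by
    rw [← edgeMidpoint_comp_perm hσ 1]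
    ext i
    simp
  rw [← comp_equiv_dotProduct_comp_equiv w μ σ, ← comp_equiv_dotProduct_comp_equiv w _ σ, hcomp]
  refine dotProduct_le_of_tail_sums_le (hanti (show (0 : Fin 3) ≤ 1 by decide))
    (hanti (show (1 : Fin 3) ≤ 2 by decide)) hl ?_ ?_ (hμ₁ _) (hμ₂ _ _ (by simp))
  · simpa [σ.sum_comp] using hμ
  · simpa [hσ] using hμ₀

end ConvexHull

theorem mem_convexHull_of_sloccTo {l μ : Fin 4 → ℝ} (hlw : IsWeight l) (hlo : IsOrdered l)
    (hl1 : 1 / 2 < l 0) (hμ : ∑ i, μ i = 1) (hμ1 : 1 / 2 ≤ μ 0)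
    (h : SLOCCto (rhoBD l) (rhoBD μ)) : μ ∈ convexHull ℝ (sloccVertices l) := by
  obtain ⟨G, hG, hGμ⟩ := exists_orthogonalSquareBounds_of_sloccTo h
  obtain ⟨hl, hlsum⟩ := hlw
  obtain ⟨h₀₁, h₁₂, h₂₃⟩ := hlo
  have hl_pos : 0 < l 0 - 1 / 2 := sub_pos.2 hl1
  let τ := (μ 0 - 1 / 2) / (l 0 - 1 / 2)
  have hτ : 0 ≤ τ := div_nonneg (sub_nonneg.2 hμ1) hl_pos.le
  have hμ₀ : μ 0 = τ * l 0 + (1 - τ) * (1 / 2) := by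
    have : τ * (l 0 - 1 / 2) = μ 0 - 1 / 2 := div_mul_cancel₀ _ hl_pos.ne'
    linarith
  have hτ_le : τ ≤ columnExcess G 0 0 := by
    have := hG.two_mul_mulVec_sub_sum_le hl hlsum 0 0
    rw [← hGμ, hμ] at this
    exact (div_le_iff₀ hl_pos).2 (by linarith)
  have hτ_one : τ ≤ 1 := by
    have := (mul_le_mul_of_nonneg_right hτ_le (hl 0)).trans
      (hG.columnExcess_mul_le_mulVec_self hl 0 0)
    rw [← hGμ] at this
    linarith
  refine mem_convexHull_sloccVertices ⟨hτ, hτ_one⟩ hlsum hμ hμ₀ (fun m => ?_) fun m n hmn => ?_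
  · have hmin (k : Fin 4) : l 3 ≤ l k := by fin_cases k <;> simp <;> linarith
    rw [hGμ]
    exact (mul_le_mul_of_nonneg_right hτ_le (hl 3)).trans
      (hG.columnExcess_mul_le_mulVec (hl 3) hmin 0 0 m)
  · have hmin (k : Fin 4) (hk : k ≠ 3) : l 2 ≤ l k := by
      fin_cases k <;> simp at hk ⊢ <;> linarith
    have hnonneg : 0 ≤ l 2 + l 3 := add_nonneg (hl 2) (hl 3)
    rw [hGμ]
    exact (mul_le_mul_of_nonneg_right hτ_le hnonneg).trans
      (hG.columnExcess_mul_add_le_mulVec_add_mulVec hnonneg h₂₃ hmin hmn 0 0)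

/-- for an ordered weight vector `λ` with `λ₁ > 1/2` and any weight
vector `μ` with `μ₁ ≥ 1/2`, `ρ_BD(λ)` can be transformed to `ρ_BD(μ)` by SLOCC iff
`μ` lies in the convex hull of the six permuted vectors `(λ₁, λ_{π(2)}, λ_{π(3)}, λ_{π(4)})`
together with `λ₁₂, λ₁₃, λ₁₄`. -/
theorem stmt12 (l μ : Fin 4 → ℝ) (hlw : IsWeight l) (hlo : IsOrdered l)
    (hl1 : 1 / 2 < l 0) (hμw : IsWeight μ) (hμ1 : 1 / 2 ≤ μ 0) :
    SLOCCto (rhoBD l) (rhoBD μ) ↔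
      μ ∈ convexHull ℝ
        (({v | ∃ σ : Equiv.Perm (Fin 4), σ 0 = 0 ∧ v = l ∘ σ} :
            Set (Fin 4 → ℝ)) ∪
          {![1/2, 1/2, 0, 0], ![1/2, 0, 1/2, 0], ![1/2, 0, 0, 1/2]}) := by
  have hverts : sloccVertices l = _ :=
    congrArg (_ ∪ ·) image_edgeMidpoint_compl_zero
  rw [← hverts]
  refine ⟨mem_convexHull_of_sloccTo hlw hlo hl1 hμw.2 hμ1, sloccTo_of_mem_convexHull ?_⟩
  linarith [hlw.1 1]

end Paper
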